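/- The two-dimensional Dubiner basis functions are pairwise L²-orthogonal on the reference triangle: for all pairs of nonnegative integer indices (i,j) ≠ (k,l), ∬_{T²} φ_{(i,j)}(ξ₁,ξ₂) φ_{(k,l)}(ξ₁,ξ₂) dξ₁ dξ₂ = 0. -/

import Mathlib

/-- The Jacobi polynomial `P_n^{a,b}` (nonnegative integer parameters `a`, `b`), defined
through the Rodrigues formula. -/
noncomputable def jacobiP (n a b : ℕ) (x : ℝ) : ℝ :=
  ((-1 : ℝ) ^ n / (2 ^ n * n.factorial)) * (1 - x) ^ (-(a : ℤ)) * (1 + x) ^ (-(b : ℤ)) *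
    iteratedDeriv n (fun y : ℝ => (1 - y) ^ (n + a) * (1 + y) ^ (n + b)) x

/-- The two-dimensional Dubiner basis function with indices `(i, j)`. -/
noncomputable def dubiner2 (i j : ℕ) (ξ : ℝ × ℝ) : ℝ :=
  jacobiP i 0 0 ((1 + 2 * ξ.1 + ξ.2) / (1 - ξ.2)) * ((1 - ξ.2) / 2) ^ i *
    jacobiP j (2 * i + 1) 0 ξ.2

/-- The reference triangle `T² = {(ξ₁,ξ₂) : ξ₁ ≥ -1, ξ₂ ≥ -1, ξ₁+ξ₂ ≤ 0}`. -/
def refTriangle : Set (ℝ × ℝ) := {ξ | -1 ≤ ξ.1 ∧ -1 ≤ ξ.2 ∧ ξ.1 + ξ.2 ≤ 0}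

/-!
The collapsed coordinates `(η, y) ↦ ((1 + η) (1 - y) / 2 - 1, y)` map the square onto the triangle
with Jacobian `(1 - y) / 2` and turn `φ_{(i,j)}` into
`P_i^{0,0}(η) ((1 - y) / 2)^i P_j^{2i+1,0}(y)`. The double integral is therefore the product of the
integral of `P_i^{0,0} P_k^{0,0}` and that of `((1 - y) / 2)^(i+k+1) P_j^{2i+1,0} P_l^{2k+1,0}`.
The first factor vanishes if `i ≠ k`; if `i = k`, the Jacobian has completed the weight to
`(1 - y)^(2i+1)` and the second factor vanishes. Jacobi orthogonality itself is `n`-fold integration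
by parts in the Rodrigues formula.
-/

open Polynomial MeasureTheory Set

theorem iteratedDeriv_polynomial_eval {𝕜 : Type*} [NontriviallyNormedField 𝕜] (n : ℕ) (p : 𝕜[X]) :
    iteratedDeriv n (fun x => p.eval x) = fun x => (derivative^[n] p).eval x := by
  induction n with
  | zero => simp
  | succ n ih =>
    ext x
    rw [iteratedDeriv_succ, ih, Polynomial.deriv, Function.iterate_succ_apply']

theorem integral_derivative_mul {a b : ℝ} {p : ℝ[X]} (ha : p.IsRoot a) (hb : p.IsRoot b)
    (q : ℝ[X]) :
    ∫ x in a..b, p.derivative.eval x * q.eval x = -∫ x in a..b, p.eval x * q.derivative.eval x := by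
  rw [intervalIntegral.integral_mul_deriv_eq_deriv_mul (fun x _ => p.hasDerivAt x)
    (fun x _ => q.hasDerivAt x) (Continuous.intervalIntegrable (by fun_prop) _ _)
    (Continuous.intervalIntegrable (by fun_prop) _ _), ha.eq_zero, hb.eq_zero]
  ring

theorem integral_iterate_derivative_mul {a b : ℝ} {n : ℕ} {p : ℝ[X]}
    (ha : (X - C a) ^ n ∣ p) (hb : (X - C b) ^ n ∣ p) (q : ℝ[X]) :
    ∫ x in a..b, (derivative^[n] p).eval x * q.eval x =
      (-1) ^ n * ∫ x in a..b, p.eval x * (derivative^[n] q).eval x := by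
  induction n generalizing p with
  | zero => simp
  | succ n ih =>
    have isRoot_of_dvd {c : ℝ} (hc : (X - C c) ^ (n + 1) ∣ p) : p.IsRoot c :=
      dvd_iff_isRoot.mp ((dvd_pow_self _ n.succ_ne_zero).trans hc)
    have dvd_derivative {c : ℝ} (hc : (X - C c) ^ (n + 1) ∣ p) : (X - C c) ^ n ∣ derivative p := by
      simpa using pow_sub_one_dvd_derivative_of_pow_dvd hc
    rw [Function.iterate_succ_apply, ih (dvd_derivative ha) (dvd_derivative hb),
      integral_derivative_mul (isRoot_of_dvd ha) (isRoot_of_dvd hb),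
      Function.iterate_succ_apply']
    ring

/-- The Jacobi weight `(1 - x)^a (1 + x)^b` as a polynomial. The function differentiated in the
Rodrigues formula for `P_n^{a,b}` is `jacobiWeight (n + a) (n + b)`. -/
noncomputable def jacobiWeight (a b : ℕ) : ℝ[X] := (1 - X) ^ a * (1 + X) ^ b

theorem eval_jacobiWeight (a b : ℕ) (x : ℝ) :
    (jacobiWeight a b).eval x = (1 - x) ^ a * (1 + x) ^ b := by
  simp [jacobiWeight]

theorem natDegree_jacobiWeight (a b : ℕ) : (jacobiWeight a b).natDegree = a + b := by
  have hm : (1 - X : ℝ[X]).natDegree = 1 := by compute_degree!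
  have hp : (1 + X : ℝ[X]).natDegree = 1 := by compute_degree!
  have hm0 : (1 - X : ℝ[X]) ≠ 0 := ne_zero_of_natDegree_gt (hm ▸ zero_lt_one)
  have hp0 : (1 + X : ℝ[X]) ≠ 0 := ne_zero_of_natDegree_gt (hp ▸ zero_lt_one)
  rw [jacobiWeight, natDegree_mul (pow_ne_zero a hm0) (pow_ne_zero b hp0), natDegree_pow,
    natDegree_pow, hm, hp, mul_one, mul_one]

theorem jacobiWeight_ne_zero (a b : ℕ) : jacobiWeight a b ≠ 0 := fun h => by
  simpa [eval_jacobiWeight] using congrArg (eval 0) h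

theorem X_sub_C_one_pow_dvd_jacobiWeight (a b : ℕ) : (X - C 1) ^ a ∣ jacobiWeight a b := by
  have h : (X - C 1 : ℝ[X]) ∣ 1 - X := ⟨-1, by simp⟩
  exact (pow_dvd_pow_of_dvd h a).mul_right _

theorem X_sub_C_neg_one_pow_dvd_jacobiWeight (a b : ℕ) : (X - C (-1)) ^ b ∣ jacobiWeight a b := by
  have h : (X - C (-1) : ℝ[X]) ∣ 1 + X := ⟨1, by simp [add_comm]⟩
  exact (pow_dvd_pow_of_dvd h b).mul_left _

theorem jacobiWeight_dvd_iterate_derivative (n a b : ℕ) :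
    jacobiWeight a b ∣ derivative^[n] (jacobiWeight (n + a) (n + b)) := by
  have hcoprime : IsCoprime (1 - X : ℝ[X]) (1 + X) := by
    refine ⟨C (1 / 2), C (1 / 2), ?_⟩
    rw [← mul_add, sub_add_add_cancel, one_add_one_eq_two, ← C_ofNat, ← C_mul]
    norm_num
  refine hcoprime.pow.mul_dvd ?_ ?_
  · simpa using pow_sub_dvd_iterate_derivative_of_pow_dvd n
      (Dvd.intro _ rfl : (1 - X) ^ (n + a) ∣ jacobiWeight (n + a) (n + b))
  · simpa using pow_sub_dvd_iterate_derivative_of_pow_dvd n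
      (Dvd.intro_left _ rfl : (1 + X) ^ (n + b) ∣ jacobiWeight (n + a) (n + b))

-- At `x = ±1` the negative powers in `jacobiP` are junk values.
theorem weight_mul_jacobiP (n a b : ℕ) {x : ℝ} (hx : x ∈ Ioo (-1) 1) :
    (1 - x) ^ a * (1 + x) ^ b * jacobiP n a b x =
      (-1) ^ n / (2 ^ n * n.factorial) *
        (derivative^[n] (jacobiWeight (n + a) (n + b))).eval x := by
  have hm : 1 - x ≠ 0 := by linarith [hx.2]
  have hp : 1 + x ≠ 0 := by linarith [hx.1]
  simp only [jacobiP, ← eval_jacobiWeight, iteratedDeriv_polynomial_eval]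
  simp only [eval_jacobiWeight, zpow_neg, zpow_natCast]
  field_simp

theorem exists_polynomial_eqOn_jacobiP (n a b : ℕ) :
    ∃ q : ℝ[X], q.degree ≤ n ∧ EqOn (jacobiP n a b) (fun x => q.eval x) (Ioo (-1) 1) := by
  obtain ⟨q, hq⟩ := jacobiWeight_dvd_iterate_derivative n a b
  refine ⟨C ((-1 : ℝ) ^ n / (2 ^ n * n.factorial)) * q, ?_, fun x hx => ?_⟩
  · refine degree_le_of_natDegree_le ((natDegree_C_mul_le _ _).trans ?_)
    rcases eq_or_ne q 0 with rfl | hq0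
    · simp
    have hdeg := natDegree_iterate_derivative (jacobiWeight (n + a) (n + b)) n
    rw [hq, natDegree_mul (jacobiWeight_ne_zero a b) hq0, natDegree_jacobiWeight,
      natDegree_jacobiWeight] at hdeg
    lia
  · have hw : (1 - x) ^ a * (1 + x) ^ b ≠ 0 :=
      mul_ne_zero (pow_ne_zero _ (by linarith [hx.2])) (pow_ne_zero _ (by linarith [hx.1]))
    apply mul_left_cancel₀ hw
    rw [weight_mul_jacobiP n a b hx, hq, eval_mul, eval_jacobiWeight]
    simp only [eval_C_mul]
    ring

theorem integral_weight_mul_jacobiP_mul_eval {n : ℕ} {q : ℝ[X]} (hq : q.degree < n) (a b : ℕ) :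
    ∫ x in (-1 : ℝ)..1, (1 - x) ^ a * (1 + x) ^ b * jacobiP n a b x * q.eval x = 0 := by
  calc
    _ = ∫ x in (-1 : ℝ)..1, (-1) ^ n / (2 ^ n * n.factorial) *
          ((derivative^[n] (jacobiWeight (n + a) (n + b))).eval x * q.eval x) := by
      refine intervalIntegral.integral_congr_Ioo_of_le (by norm_num) fun x hx => ?_
      simp only [weight_mul_jacobiP n a b hx, mul_assoc]
    _ = 0 := by
      rw [intervalIntegral.integral_const_mul, integral_iterate_derivative_mul
        ((pow_dvd_pow _ (n.le_add_right b)).trans (X_sub_C_neg_one_pow_dvd_jacobiWeight _ _))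
        ((pow_dvd_pow _ (n.le_add_right a)).trans (X_sub_C_one_pow_dvd_jacobiWeight _ _)),
        iterate_derivative_eq_zero_of_degree_lt hq]
      simp

theorem integral_weight_mul_jacobiP_mul_jacobiP {m n : ℕ} (h : m ≠ n) (a b : ℕ) :
    ∫ x in (-1 : ℝ)..1,
      (1 - x) ^ a * (1 + x) ^ b * (jacobiP m a b x * jacobiP n a b x) = 0 := by
  wlog hmn : n < m generalizing m n
  · simpa only [mul_comm (jacobiP m a b _)] using this h.symm (h.lt_of_le (not_lt.mp hmn))
  obtain ⟨q, hqdeg, hq⟩ := exists_polynomial_eqOn_jacobiP n a b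
  rw [← integral_weight_mul_jacobiP_mul_eval (hqdeg.trans_lt (Nat.cast_lt.mpr hmn)) a b]
  refine intervalIntegral.integral_congr_Ioo_of_le (by norm_num) fun x hx => ?_
  simp only [hq hx, mul_assoc]

/-- The map from the square to the reference triangle that squeezes each horizontal line onto the
corresponding slice of the triangle; the edge `p.2 = 1` is sent to the vertex `(-1, 1)`. -/
noncomputable def collapse (p : ℝ × ℝ) : ℝ × ℝ := ((1 + p.1) * (1 - p.2) / 2 - 1, p.2)

/-- The collapsed coordinates `(η₁, ξ₂)` of a point of the triangle, undefined (with the junk value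
`η₁ = 0`) at the vertex `(-1, 1)`. -/
noncomputable def uncollapse (ξ : ℝ × ℝ) : ℝ × ℝ := ((1 + 2 * ξ.1 + ξ.2) / (1 - ξ.2), ξ.2)

/-- The square `[-1, 1] × [-1, 1)`, without the edge on which `collapse` degenerates. -/
def collapseDomain : Set (ℝ × ℝ) := Icc (-1) 1 ×ˢ Ico (-1) 1

theorem measurableSet_collapseDomain : MeasurableSet collapseDomain :=
  measurableSet_Icc.prod measurableSet_Ico

theorem collapse_uncollapse {ξ : ℝ × ℝ} (hξ : ξ.2 ≠ 1) : collapse (uncollapse ξ) = ξ := by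
  have : 1 - ξ.2 ≠ 0 := sub_ne_zero.mpr hξ.symm
  ext
  · simp only [collapse, uncollapse]
    field_simp
    ring
  · rfl

theorem uncollapse_collapse {p : ℝ × ℝ} (hp : p.2 ≠ 1) : uncollapse (collapse p) = p := by
  have : 1 - p.2 ≠ 0 := sub_ne_zero.mpr hp.symm
  ext
  · simp only [collapse, uncollapse]
    field_simp
    ring
  · rfl

theorem injOn_collapse : InjOn collapse {p | p.2 ≠ 1} :=
  LeftInvOn.injOn (f₁' := uncollapse) fun _ hp => uncollapse_collapse hp

theorem image_collapse : collapse '' collapseDomain = refTriangle \ {(-1, 1)} := by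
  refine Subset.antisymm ?_ ?_
  · rintro _ ⟨⟨η, y⟩, ⟨⟨hη₁, hη₂⟩, hy₁, hy₂⟩, rfl⟩
    dsimp only at hη₁ hη₂ hy₁ hy₂
    have hleft : 0 ≤ (1 + η) * (1 - y) := mul_nonneg (by linarith) (by linarith)
    have hright : 0 ≤ (1 - η) * (1 - y) := mul_nonneg (by linarith) (by linarith)
    refine ⟨⟨?_, hy₁, ?_⟩, fun h => hy₂.ne (congrArg Prod.snd h)⟩
    all_goals
      dsimp only [collapse]
      linarith
  · rintro ⟨x, y⟩ ⟨⟨hx, hy, hxy⟩, hne⟩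
    dsimp only at hx hy hxy
    have hy₁ : y < 1 := by
      by_contra! hy₁
      exact hne (Prod.ext (by dsimp only; linarith) (by dsimp only; linarith))
    have hpos : 0 < 1 - y := sub_pos.mpr hy₁
    refine ⟨uncollapse (x, y), ⟨⟨?_, ?_⟩, hy, hy₁⟩, collapse_uncollapse hy₁.ne⟩
    · rw [uncollapse, le_div_iff₀ hpos]
      linarith
    · rw [uncollapse, div_le_iff₀ hpos]
      linarith

/-- The derivative of `collapse` at `p`, given by its Jacobian matrix. -/
noncomputable def fderivCollapse (p : ℝ × ℝ) : ℝ × ℝ →L[ℝ] ℝ × ℝ :=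
  (Matrix.toLin (.finTwoProd ℝ) (.finTwoProd ℝ)
    !![(1 - p.2) / 2, -(1 + p.1) / 2; 0, 1]).toContinuousLinearMap

theorem hasFDerivAt_collapse (p : ℝ × ℝ) : HasFDerivAt collapse (fderivCollapse p) p := by
  have hfst : HasFDerivAt (fun p : ℝ × ℝ => 1 + p.1) (.fst ℝ ℝ ℝ) p := hasFDerivAt_fst.const_add 1
  have hsnd : HasFDerivAt (fun p : ℝ × ℝ => 1 - p.2) (-.snd ℝ ℝ ℝ) p := hasFDerivAt_snd.const_sub 1
  convert! (((hfst.mul hsnd).mul_const (2⁻¹ : ℝ)).sub_const 1).prodMk hasFDerivAt_snd using 1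
  rw [fderivCollapse, Matrix.toLin_finTwoProd_toContinuousLinearMap]
  ext <;> simp <;> ring

theorem det_fderivCollapse (p : ℝ × ℝ) : (fderivCollapse p).det = (1 - p.2) / 2 := by
  simp [fderivCollapse, LinearMap.det_toContinuousLinearMap, Matrix.det_fin_two_of]

theorem setIntegral_refTriangle {E : Type*} [NormedAddCommGroup E] [NormedSpace ℝ E]
    (f : ℝ × ℝ → E) :
    ∫ ξ in refTriangle, f ξ = ∫ p in collapseDomain, ((1 - p.2) / 2) • f (collapse p) := by
  have hinj : InjOn collapse collapseDomain := injOn_collapse.mono fun p hp => hp.2.2.ne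
  calc
    _ = ∫ ξ in collapse '' collapseDomain, f ξ := by
      rw [image_collapse]
      exact setIntegral_congr_set (sdiff_null_ae_eq_self (measure_singleton _)).symm
    _ = ∫ p in collapseDomain, |(fderivCollapse p).det| • f (collapse p) :=
      integral_image_eq_integral_abs_det_fderiv_smul volume measurableSet_collapseDomain
        (fun p _ => (hasFDerivAt_collapse p).hasFDerivWithinAt) hinj f
    _ = _ := by
      refine setIntegral_congr_fun measurableSet_collapseDomain fun p hp => ?_
      have hnonneg : 0 ≤ (1 - p.2) / 2 := by linarith [hp.2.2]
      simp only [det_fderivCollapse, abs_of_nonneg hnonneg]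

theorem dubiner2_collapse (i j : ℕ) {p : ℝ × ℝ} (hp : p.2 ≠ 1) :
    dubiner2 i j (collapse p) =
      jacobiP i 0 0 p.1 * ((1 - p.2) / 2) ^ i * jacobiP j (2 * i + 1) 0 p.2 := by
  have hfst : (1 + 2 * (collapse p).1 + (collapse p).2) / (1 - (collapse p).2) = p.1 :=
    congrArg Prod.fst (uncollapse_collapse hp)
  rw [dubiner2, hfst, collapse]

theorem setIntegral_dubiner2_mul_dubiner2 (i j k l : ℕ) :
    ∫ ξ in refTriangle, dubiner2 i j ξ * dubiner2 k l ξ =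
      (∫ η in (-1 : ℝ)..1, jacobiP i 0 0 η * jacobiP k 0 0 η) *
        ∫ y in (-1 : ℝ)..1, ((1 - y) / 2) ^ (i + k + 1) *
          (jacobiP j (2 * i + 1) 0 y * jacobiP l (2 * k + 1) 0 y) := by
  have hle : (-1 : ℝ) ≤ 1 := by norm_num
  rw [setIntegral_refTriangle, intervalIntegral.integral_of_le hle,
    intervalIntegral.integral_of_le hle, ← integral_Icc_eq_integral_Ioc,
    ← integral_Ico_eq_integral_Ioc, ← setIntegral_prod_mul]
  refine setIntegral_congr_fun measurableSet_collapseDomain fun p hp => ?_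
  have hp : p.2 ≠ 1 := hp.2.2.ne
  simp only [dubiner2_collapse _ _ hp, smul_eq_mul]
  ring

/-- The two-dimensional Dubiner basis functions are pairwise L²-orthogonal on
the reference triangle. -/
theorem dubiner2_orthogonal (i j k l : ℕ) (h : (i, j) ≠ (k, l)) :
    ∫ ξ in refTriangle, dubiner2 i j ξ * dubiner2 k l ξ = 0 := by
  rw [setIntegral_dubiner2_mul_dubiner2]
  rcases eq_or_ne i k with rfl | hik
  · have hjl : j ≠ l := fun hjl => h (congrArg (Prod.mk i) hjl)
    have horth := integral_weight_mul_jacobiP_mul_jacobiP hjl (2 * i + 1) 0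
    simp only [pow_zero, mul_one] at horth
    simp only [← two_mul, div_pow, div_mul_eq_mul_div, intervalIntegral.integral_div, horth,
      zero_div, mul_zero]
  · have horth := integral_weight_mul_jacobiP_mul_jacobiP hik 0 0
    simp only [pow_zero, one_mul] at horth
    rw [horth, zero_mul]
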